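/- Let T ≥ 1, m ≥ 1 and ℐ = {1,…,m}. For each j ∈ ℐ let 𝒩^j_0, …, 𝒩^j_T be nonempty subsets of 𝒩 with 𝒩^j_0 a singleton and 𝒩^j_T = 𝒩. For each k ∈ 𝒩, j ∈ ℐ and t ∈ {0,…,T−1} let 𝒩^{k,j}_t ⊆ 𝒩^j_t be sets with 𝒩^{k,j}_t ∩ 𝒩^{k,j'}_t = ∅ whenever j ≠ j'. Let numbers α_{i,j}(t) ∈ [0,1] satisfy: for all t ∈ {0,…,T−1}, all i,j ∈ ℐ and every k ∈ 𝒩^i_{t+1}, Σ_{l∈𝒩^{k,j}_t} γ_{k,l}(t) ≥ α_{i,j}(t). Then: (i) each m×m matrix A(t) = (α_{i,j}(t))_{i,j∈ℐ} is sub-stochastic (nonnegative entries, every row sum at most 1); (ii) every solution x of the consensus system satisfies Δ(T) ≤ (1 − max_{j∈ℐ} Σ_{i∈ℐ} (A(T−1)·A(T−2)···A(0))_{j,i})·Δ(0). -/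

import Mathlib

/-!
Let `y` be a solution with nonnegative values. The `i`-th coordinate of `A(t-1) ⋯ A(0)` applied to
the root values of `y` bounds `y(t)` from below on the `t`-th layer of the `i`-th tree: an agent of
the next layer puts weight at least `α_{i,j}(t)` on the current layer of tree `j`, disjointness of
the sets `𝒩^{k,j}_t` lets these contributions be added, and all other weight meets nonnegative
values. If `a ≤ x(0) ≤ b`, this applies to both `x - a` and `b - x`. In the sum of the two bounds at
time `T` the root values cancel, leaving the `i`-th row sum of the product times `b - a` as a lower
bound for `(b - a) - (x_k(T) - x_l(T))`.
-/

/-- The diameter of a finite family of reals: max minus min. -/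
noncomputable def diam {N : Type*} [Fintype N] [Nonempty N] (y : N → ℝ) : ℝ :=
  Finset.univ.sup' Finset.univ_nonempty y - Finset.univ.inf' Finset.univ_nonempty y

/-- The ordered (time-decreasing) product `A(T-1) ⬝ A(T-2) ⬝ ⋯ ⬝ A(0)`. -/
noncomputable def prodRev {m : ℕ} (A : ℕ → Matrix (Fin m) (Fin m) ℝ) :
    ℕ → Matrix (Fin m) (Fin m) ℝ
  | 0 => 1
  | t + 1 => A t * prodRev A t

section IsLinearSolution

variable {R N : Type*} [Fintype N]

/-- The sequence `x` solves the linear time-dependent system `x (t + 1) = Γ t *ᵥ x t`. For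
row-stochastic `Γ t` this is the consensus system; it is also used for the sub-stochastic comparison
system driven by the matrices `A t`. -/
def IsLinearSolution [NonUnitalNonAssocSemiring R] (Γ : ℕ → Matrix N N R) (x : ℕ → N → R) : Prop :=
  ∀ t, x (t + 1) = (Γ t).mulVec (x t)

theorem isLinearSolution_smul_one [CommSemiring R] {Γ : ℕ → Matrix N N R}
    (hΓ : ∀ t, (Γ t).mulVec 1 = 1) (c : R) : IsLinearSolution Γ fun _ ↦ c • 1 :=
  fun t ↦ by rw [Matrix.mulVec_smul, hΓ t]

theorem IsLinearSolution.sub [NonUnitalNonAssocRing R] {Γ : ℕ → Matrix N N R} {x y : ℕ → N → R}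
    (hx : IsLinearSolution Γ x) (hy : IsLinearSolution Γ y) :
    IsLinearSolution Γ (x - y) :=
  fun t ↦ by simp only [Pi.sub_apply, hx t, hy t, Matrix.mulVec_sub]

theorem IsLinearSolution.nonneg [Semiring R] [PartialOrder R] [IsOrderedRing R]
    {Γ : ℕ → Matrix N N R} {x : ℕ → N → R} (hx : IsLinearSolution Γ x) (hx₀ : 0 ≤ x 0) {t : ℕ}
    (hΓ : ∀ s < t, ∀ k l, 0 ≤ Γ s k l) : 0 ≤ x t := by
  induction t with
  | zero => exact hx₀
  | succ t ih =>
    rw [hx t]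
    exact fun k ↦ dotProduct_nonneg_of_nonneg (hΓ t t.lt_succ_self k)
      (ih fun s hs ↦ hΓ s (hs.trans t.lt_succ_self))

theorem isLinearSolution_prodRev_mulVec {m : ℕ} (A : ℕ → Matrix (Fin m) (Fin m) ℝ)
    (v : Fin m → ℝ) : IsLinearSolution A fun t ↦ (prodRev A t).mulVec v :=
  fun t ↦ (Matrix.mulVec_mulVec v (A t) (prodRev A t)).symm

end IsLinearSolution

section Layers

variable {R N ι : Type*} [Fintype N] [Fintype ι] [Semiring R] [PartialOrder R] [IsOrderedRing R]

theorem dotProduct_le_dotProduct_of_pairwise_disjoint {a z : ι → R} {w y : N → R}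
    {s : ι → Finset N} (hs : Pairwise (Function.onFun Disjoint s)) (hw : 0 ≤ w) (hy : 0 ≤ y)
    (hz : 0 ≤ z) (haw : ∀ j, a j ≤ ∑ l ∈ s j, w l) (hzy : ∀ j, ∀ l ∈ s j, z j ≤ y l) :
    a ⬝ᵥ z ≤ w ⬝ᵥ y := by
  classical
  calc ∑ j, a j * z j
      ≤ ∑ j, (∑ l ∈ s j, w l) * z j :=
        Finset.sum_le_sum fun j _ ↦ mul_le_mul_of_nonneg_right (haw j) (hz j)
    _ = ∑ j, ∑ l ∈ s j, w l * z j := by simp only [Finset.sum_mul]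
    _ ≤ ∑ j, ∑ l ∈ s j, w l * y l :=
        Finset.sum_le_sum fun j _ ↦ Finset.sum_le_sum fun l hl ↦
          mul_le_mul_of_nonneg_left (hzy j l hl) (hw l)
    _ = ∑ l ∈ Finset.univ.biUnion s, w l * y l := (Finset.sum_biUnion (hs.set_pairwise _)).symm
    _ ≤ ∑ l, w l * y l :=
        Finset.sum_le_univ_sum_of_nonneg fun l ↦ mul_nonneg (hw l) (hy l)

/-- One time step of a family of trees indexed by `ι`, passing from the layers `S j` to the layers
`S' i`: every agent of `S' i` puts weight at least `A i j` on `S j`. The sets `s j`, which are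
`𝒩^{k,j}_t` in the paper, ensure that no weight is counted for two trees. -/
def IsLayerTransition (G : Matrix N N R) (S S' : ι → Finset N) (A : Matrix ι ι R) : Prop :=
  ∀ i, ∀ k ∈ S' i, ∃ s : ι → Finset N, Pairwise (Function.onFun Disjoint s) ∧
    (∀ j, s j ⊆ S j) ∧ ∀ j, A i j ≤ ∑ l ∈ s j, G k l

namespace IsLayerTransition

variable {G : Matrix N N R} {S S' : ι → Finset N} {A : Matrix ι ι R}

theorem mulVec_le_mulVec (h : IsLayerTransition G S S' A) (hG : ∀ k l, 0 ≤ G k l) {y : N → R}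
    (hy : 0 ≤ y) {z : ι → R} (hz : 0 ≤ z) (hzy : ∀ j, ∀ l ∈ S j, z j ≤ y l) {i : ι} {k : N}
    (hk : k ∈ S' i) : A.mulVec z i ≤ G.mulVec y k := by
  obtain ⟨s, hs, hsS, hAs⟩ := h i k hk
  exact dotProduct_le_dotProduct_of_pairwise_disjoint hs (hG k) hy hz hAs
    fun j l hl ↦ hzy j l (hsS j hl)

theorem sum_row_le_sum_row (h : IsLayerTransition G S S' A) (hG : ∀ k l, 0 ≤ G k l) {i : ι} {k : N}
    (hk : k ∈ S' i) : ∑ j, A i j ≤ ∑ l, G k l := by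
  simpa only [Matrix.mulVec, dotProduct_one] using
    h.mulVec_le_mulVec hG zero_le_one zero_le_one (fun _ _ _ ↦ le_rfl) hk

end IsLayerTransition

theorem IsLinearSolution.le_of_isLayerTransition {Γ : ℕ → Matrix N N R} {A : ℕ → Matrix ι ι R}
    {S : ℕ → ι → Finset N} {y : ℕ → N → R} {z : ℕ → ι → R} (hy : IsLinearSolution Γ y)
    (hz : IsLinearSolution A z) {t : ℕ} (hΓ : ∀ s < t, ∀ k l, 0 ≤ Γ s k l)
    (hA : ∀ s < t, ∀ i j, 0 ≤ A s i j)
    (hS : ∀ s < t, IsLayerTransition (Γ s) (S s) (S (s + 1)) (A s)) (hy₀ : 0 ≤ y 0) (hz₀ : 0 ≤ z 0)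
    (hzy₀ : ∀ j, ∀ l ∈ S 0 j, z 0 j ≤ y 0 l) : ∀ i, ∀ k ∈ S t i, z t i ≤ y t k := by
  induction t with
  | zero => exact hzy₀
  | succ t ih =>
    have hlt {s : ℕ} (hs : s < t) : s < t + 1 := hs.trans t.lt_succ_self
    have hy_nonneg : 0 ≤ y t := hy.nonneg hy₀ fun s hs ↦ hΓ s (hlt hs)
    have hz_nonneg : 0 ≤ z t := hz.nonneg hz₀ fun s hs ↦ hA s (hlt hs)
    have hzy := ih (fun s hs ↦ hΓ s (hlt hs)) (fun s hs ↦ hA s (hlt hs)) fun s hs ↦ hS s (hlt hs)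
    intro i k hk
    rw [hy t, hz t]
    exact (hS t t.lt_succ_self).mulVec_le_mulVec (hΓ t t.lt_succ_self) hy_nonneg hz_nonneg hzy hk

end Layers

theorem diam_le_iff {N : Type*} [Fintype N] [Nonempty N] {y : N → ℝ} {c : ℝ} :
    diam y ≤ c ↔ ∀ k l, y k - y l ≤ c := by
  rw [diam, sub_le_iff_le_add', Finset.sup'_le_iff]
  simp only [← sub_le_iff_le_add, Finset.le_inf'_iff, Finset.mem_univ, true_imp_iff]
  exact forall₂_congr fun _ _ ↦ sub_le_comm

section Contraction

variable {N : Type*} [Fintype N] {Γ : ℕ → Matrix N N ℝ} {m T : ℕ}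
  {A : ℕ → Matrix (Fin m) (Fin m) ℝ} {S : ℕ → Fin m → Finset N} {root : Fin m → N}

theorem IsLinearSolution.prodRev_mulVec_root_le {y : ℕ → N → ℝ} (hy : IsLinearSolution Γ y)
    (hΓ : ∀ t < T, ∀ k l, 0 ≤ Γ t k l) (hA : ∀ t < T, ∀ i j, 0 ≤ A t i j)
    (hS : ∀ t < T, IsLayerTransition (Γ t) (S t) (S (t + 1)) (A t)) (hroot : ∀ j, S 0 j = {root j})
    (hy₀ : 0 ≤ y 0) {i : Fin m} {k : N} (hk : k ∈ S T i) :
    (prodRev A T).mulVec (y 0 ∘ root) i ≤ y T k := by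
  refine hy.le_of_isLayerTransition (isLinearSolution_prodRev_mulVec A (y 0 ∘ root)) hΓ hA hS hy₀
    ?_ ?_ i k hk
  · simpa [prodRev] using show 0 ≤ y 0 ∘ root from fun j ↦ hy₀ (root j)
  · simp [prodRev, hroot]

variable [DecidableEq N]

theorem IsLinearSolution.sub_le_one_sub_sum_prodRev_mul {x : ℕ → N → ℝ}
    (hx : IsLinearSolution Γ x) (hΓ : ∀ t, Γ t ∈ Matrix.rowStochastic ℝ N)
    (hA : ∀ t < T, ∀ i j, 0 ≤ A t i j)
    (hS : ∀ t < T, IsLayerTransition (Γ t) (S t) (S (t + 1)) (A t)) (hroot : ∀ j, S 0 j = {root j})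
    {a b : ℝ} (ha : ∀ k, a ≤ x 0 k) (hb : ∀ k, x 0 k ≤ b) {i : Fin m} {k l : N} (hk : k ∈ S T i)
    (hl : l ∈ S T i) : x T k - x T l ≤ (1 - ∑ j, prodRev A T i j) * (b - a) := by
  have hconst (c : ℝ) : IsLinearSolution Γ fun _ ↦ c • 1 :=
    isLinearSolution_smul_one (fun t ↦ (hΓ t).2) c
  have hlower : ∑ j, prodRev A T i j * (x 0 (root j) - a) ≤ x T l - a := by
    simpa [Matrix.mulVec, dotProduct] using (hx.sub (hconst a)).prodRev_mulVec_root_le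
      (fun t _ ↦ (hΓ t).1) hA hS hroot (fun k ↦ by simpa using ha k) hl
  have hupper : ∑ j, prodRev A T i j * (b - x 0 (root j)) ≤ b - x T k := by
    simpa [Matrix.mulVec, dotProduct] using ((hconst b).sub hx).prodRev_mulVec_root_le
      (fun t _ ↦ (hΓ t).1) hA hS hroot (fun k ↦ by simpa using hb k) hk
  have hsum : (∑ j, prodRev A T i j) * (b - a) =
      ∑ j, prodRev A T i j * (x 0 (root j) - a) + ∑ j, prodRev A T i j * (b - x 0 (root j)) := by
    rw [Finset.sum_mul, ← Finset.sum_add_distrib]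
    exact Finset.sum_congr rfl fun j _ ↦ by ring
  linarith

theorem IsLinearSolution.diam_le_one_sub_sum_prodRev_mul_diam [Nonempty N] {x : ℕ → N → ℝ}
    (hx : IsLinearSolution Γ x) (hΓ : ∀ t, Γ t ∈ Matrix.rowStochastic ℝ N)
    (hA : ∀ t < T, ∀ i j, 0 ≤ A t i j)
    (hS : ∀ t < T, IsLayerTransition (Γ t) (S t) (S (t + 1)) (A t)) (hroot : ∀ j, S 0 j = {root j})
    {i : Fin m} (hi : S T i = Finset.univ) :
    diam (x T) ≤ (1 - ∑ j, prodRev A T i j) * diam (x 0) :=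
  diam_le_iff.2 fun k l ↦ hx.sub_le_one_sub_sum_prodRev_mul hΓ hA hS hroot
    (fun n ↦ Finset.inf'_le _ (Finset.mem_univ n)) (fun n ↦ Finset.le_sup' _ (Finset.mem_univ n))
    (hi ▸ Finset.mem_univ k) (hi ▸ Finset.mem_univ l)

end Contraction

/-- Lemma 3 of the paper: contraction estimate along `m` settling spanning-trees.
(i) each matrix `A(t) = (α_{i,j}(t))` is sub-stochastic;
(ii) `Δ(T) ≤ (1 - max_j Σ_i (A(T-1)⋯A(0))_{j,i}) Δ(0)`. -/
theorem diam_contraction_multiple_trees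
    {N : Type*} [Fintype N] [Nonempty N]
    (Γ : ℕ → Matrix N N ℝ)
    (hnn : ∀ t k l, 0 ≤ Γ t k l)
    (hrow : ∀ t k, ∑ l, Γ t k l = 1)
    (T m : ℕ) (hT : 1 ≤ T) (hm : 1 ≤ m)
    (Ns : Fin m → ℕ → Finset N) (root : Fin m → N)
    (hNne : ∀ j t, t ≤ T → (Ns j t).Nonempty)
    (hN0 : ∀ j, Ns j 0 = {root j})
    (hNT : ∀ j, Ns j T = Finset.univ)
    (Nk : N → Fin m → ℕ → Finset N)
    (hNk : ∀ k j t, t < T → Nk k j t ⊆ Ns j t)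
    (hdisj : ∀ k j j' t, t < T → j ≠ j' → Disjoint (Nk k j t) (Nk k j' t))
    (α : Fin m → Fin m → ℕ → ℝ)
    (hα : ∀ i j t, t < T → α i j t ∈ Set.Icc (0 : ℝ) 1)
    (hmain : ∀ t < T, ∀ i j : Fin m, ∀ k ∈ Ns i (t + 1),
      α i j t ≤ ∑ l ∈ Nk k j t, Γ t k l)
    (x : ℕ → N → ℝ)
    (hx : ∀ t, x (t + 1) = (Γ t).mulVec (x t)) :
    (∀ t < T, (∀ i j, 0 ≤ α i j t) ∧ (∀ i, ∑ j, α i j t ≤ 1)) ∧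
    diam (x T) ≤
      (1 - Finset.univ.sup' (Finset.univ_nonempty_iff.mpr ⟨⟨0, hm⟩⟩)
        (fun j : Fin m =>
          ∑ i, prodRev (fun t => Matrix.of fun i' j' => α i' j' t) T j i)) * diam (x 0) := by
  classical
  have hΓ (t : ℕ) : Γ t ∈ Matrix.rowStochastic ℝ N :=
    Matrix.mem_rowStochastic_iff_sum.2 ⟨hnn t, hrow t⟩
  set A : ℕ → Matrix (Fin m) (Fin m) ℝ := fun t ↦ Matrix.of fun i j ↦ α i j t
  have hA : ∀ t < T, ∀ i j, 0 ≤ A t i j := fun t ht i j ↦ (hα i j t ht).1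
  have hS : ∀ t < T, IsLayerTransition (Γ t) (Ns · t) (Ns · (t + 1)) (A t) := fun t ht i k hk ↦
    ⟨(Nk k · t), fun j j' hne ↦ hdisj k j j' t ht hne, fun j ↦ hNk k j t ht,
      fun j ↦ hmain t ht i j k hk⟩
  refine ⟨fun t ht ↦ ⟨hA t ht, fun i ↦ ?_⟩, ?_⟩
  · obtain ⟨k, hk⟩ := hNne i (t + 1) ht
    exact ((hS t ht).sum_row_le_sum_row (hnn t) hk).trans_eq (hrow t k)
  · obtain ⟨i, -, hi⟩ := Finset.exists_mem_eq_sup' (Finset.univ_nonempty_iff.mpr ⟨⟨0, hm⟩⟩)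
      fun i : Fin m ↦ ∑ j, prodRev A T i j
    rw [hi]
    exact IsLinearSolution.diam_le_one_sub_sum_prodRev_mul_diam (S := fun t j ↦ Ns j t) hx hΓ hA hS
      hN0 (hNT i)
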